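/- arXiv:1608.06423 — 2 statements merged into one kernel-verified Lean document; each statement's English description precedes it below -/
import Mathlib

section
/- Let ε > 0, let r be a real number, and let Q and m be positive real numbers satisfying πε ≤ e·m·√Q. Then for every complex number τ = x + iy with πε/(Qm²e) ≤ y ≤ e/(πε), one has T(y, ε/2) + T(y/(Qm²|τ − r|²), ε/2) ≥ 2·T(1/(m√Q), ε/2), and equality holds for τ = r + i/(m√Q). In other words, on this region the total number of terms needed to approximate the two integrals obtained by splitting the path from i∞ to the cusp r at the point τ is minimized by taking τ = r + i/(m√Q). -/
/-- The truncation bound `T(y, ε) = -log(2πyε)/(2πy)`. -/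
noncomputable def Tbound (y ε : ℝ) : ℝ := -Real.log (2 * Real.pi * y * ε) / (2 * Real.pi * y)

/-!
In terms of `u = 1/(2πyε)` the truncation bound is `T(y, ε) = ε · u log u`. The speeds of the two
sums satisfy `y · y/(Qm²|τ - r|²) ≤ 1/(Qm²)`, because `y = Im (τ - r) ≤ |τ - r|`; so the geometric
mean of the two values of `u`, and with it their arithmetic mean, is at least the value `c` at
speed `1/(m√Q)`. Jensen's inequality for `u ↦ u log u`, followed by its monotonicity on `[1/e, ∞)`,
gives the lower bound; the condition `πε ≤ e·m·√Q` says exactly that `c ≥ 1/e`.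
-/

lemma two_mul_mul_log_le_of_sq_le_mul {u v c : ℝ} (hu : 0 ≤ u) (hv : 0 ≤ v)
    (hc : Real.exp (-1) ≤ c) (hcuv : c ^ 2 ≤ u * v) :
    2 * (c * Real.log c) ≤ u * Real.log u + v * Real.log v := by
  have hmean : c ≤ 1 / 2 * (u + v) := by
    linarith [two_mul_le_add_of_sq_le_mul hu hv hcuv]
  have hmono : c * Real.log c ≤ 1 / 2 * (u + v) * Real.log (1 / 2 * (u + v)) :=
    Real.mul_log_strictMonoOn.monotoneOn hc (hc.trans hmean) hmean
  have hjensen : 1 / 2 * (u + v) * Real.log (1 / 2 * (u + v)) ≤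
      1 / 2 * (u * Real.log u + v * Real.log v) := by
    obtain ⟨-, hconvex⟩ := Real.convexOn_mul_log
    simpa only [smul_eq_mul, ← mul_add] using
      hconvex hu hv one_half_pos.le one_half_pos.le (add_halves 1)
  linarith

lemma Tbound_eq_mul_inv_mul_log_inv {ε : ℝ} (hε : ε ≠ 0) (y : ℝ) :
    Tbound y ε =
      ε * ((2 * Real.pi * y * ε)⁻¹ * Real.log (2 * Real.pi * y * ε)⁻¹) := by
  rw [Tbound, Real.log_inv]
  field_simp

lemma two_mul_Tbound_le_add_of_mul_le_sq {ε s y₁ y₂ : ℝ} (hε : 0 < ε) (hs : 0 < s)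
    (hy₁ : 0 < y₁) (hy₂ : 0 < y₂) (hsε : 2 * Real.pi * s * ε ≤ Real.exp 1)
    (hmul : y₁ * y₂ ≤ s ^ 2) :
    2 * Tbound s ε ≤ Tbound y₁ ε + Tbound y₂ ε := by
  have hinv : Real.exp (-1) ≤ (2 * Real.pi * s * ε)⁻¹ := by
    rw [Real.exp_neg]
    exact inv_anti₀ (by positivity) hsε
  have hgeom : (2 * Real.pi * s * ε)⁻¹ ^ 2 ≤
      (2 * Real.pi * y₁ * ε)⁻¹ * (2 * Real.pi * y₂ * ε)⁻¹ := by
    rw [inv_pow, ← mul_inv]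
    apply inv_anti₀ (by positivity)
    calc 2 * Real.pi * y₁ * ε * (2 * Real.pi * y₂ * ε)
        = (2 * Real.pi * ε) ^ 2 * (y₁ * y₂) := by ring
      _ ≤ (2 * Real.pi * ε) ^ 2 * s ^ 2 := by gcongr
      _ = (2 * Real.pi * s * ε) ^ 2 := by ring
  have hsum := two_mul_mul_log_le_of_sq_le_mul (by positivity) (by positivity) hinv hgeom
  simp only [Tbound_eq_mul_inv_mul_log_inv hε.ne']
  rw [← mul_add, mul_left_comm]
  exact mul_le_mul_of_nonneg_left hsum hε.le

/-- The speed `Im(τ)/(Qm²|τ - r|²)` of the sum for the part of the path ending at the cusp `r`.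
It depends on `Q` and `m` only through `x = m√Q`. -/
noncomputable def cuspSpeed (x r : ℝ) (τ : ℂ) : ℝ := τ.im / (x ^ 2 * ‖τ - (r : ℂ)‖ ^ 2)

lemma cuspSpeed_mul_sqrt {Q : ℝ} (hQ : 0 ≤ Q) (m r : ℝ) (τ : ℂ) :
    cuspSpeed (m * Real.sqrt Q) r τ = τ.im / (Q * m ^ 2 * ‖τ - (r : ℂ)‖ ^ 2) := by
  rw [cuspSpeed, mul_pow, Real.sq_sqrt hQ, mul_comm (m ^ 2)]

lemma im_sq_le_norm_sub_ofReal_sq (τ : ℂ) (r : ℝ) : τ.im ^ 2 ≤ ‖τ - (r : ℂ)‖ ^ 2 := by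
  simpa using pow_le_pow_left₀ (abs_nonneg _) (Complex.abs_im_le_norm (τ - (r : ℂ))) 2

lemma cuspSpeed_pos {x : ℝ} {τ : ℂ} (hx : x ≠ 0) (hτ : 0 < τ.im) (r : ℝ) :
    0 < cuspSpeed x r τ := by
  have hnorm : 0 < ‖τ - (r : ℂ)‖ ^ 2 :=
    (pow_pos hτ 2).trans_le (im_sq_le_norm_sub_ofReal_sq τ r)
  exact div_pos hτ (by positivity)

lemma im_mul_cuspSpeed_le (x r : ℝ) (τ : ℂ) : τ.im * cuspSpeed x r τ ≤ (1 / x) ^ 2 :=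
  calc τ.im * (τ.im / (x ^ 2 * ‖τ - (r : ℂ)‖ ^ 2))
      = (1 / x) ^ 2 * (τ.im ^ 2 / ‖τ - (r : ℂ)‖ ^ 2) := by ring
    _ ≤ (1 / x) ^ 2 := mul_le_of_le_one_right (sq_nonneg _)
        (div_le_one_of_le₀ (im_sq_le_norm_sub_ofReal_sq τ r) (sq_nonneg _))

lemma cuspSpeed_ofReal_add_I_div {x : ℝ} (hx : x ≠ 0) (r : ℝ) :
    cuspSpeed x r ((r : ℂ) + Complex.I / (x : ℂ)) = 1 / x := by
  have him : ((r : ℂ) + Complex.I / (x : ℂ)).im = 1 / x := by simp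
  have hnorm : ‖(r : ℂ) + Complex.I / (x : ℂ) - (r : ℂ)‖ = |1 / x| := by simp
  rw [cuspSpeed, him, hnorm, sq_abs, ← mul_pow, mul_one_div_cancel hx, one_pow, div_one]

theorem optimal_split_point_general (ε r Q m : ℝ) (hε : 0 < ε) (hQ : 0 < Q) (hm : 0 < m)
    (h : Real.pi * ε ≤ Real.exp 1 * m * Real.sqrt Q) :
    (∀ τ : ℂ, 0 < τ.im →
      Tbound τ.im (ε / 2) +
        Tbound (τ.im / (Q * m ^ 2 * ‖τ - (r : ℂ)‖ ^ 2)) (ε / 2) ≥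
      2 * Tbound (1 / (m * Real.sqrt Q)) (ε / 2)) ∧
    (let τ₀ : ℂ := (r : ℂ) + Complex.I / ((m : ℂ) * (Real.sqrt Q : ℂ))
     Tbound τ₀.im (ε / 2) +
       Tbound (τ₀.im / (Q * m ^ 2 * ‖τ₀ - (r : ℂ)‖ ^ 2)) (ε / 2) =
     2 * Tbound (1 / (m * Real.sqrt Q)) (ε / 2)) := by
  simp only [← cuspSpeed_mul_sqrt hQ.le, ← Complex.ofReal_mul]
  rw [mul_assoc] at h
  have hx : 0 < m * Real.sqrt Q := by positivity
  generalize m * Real.sqrt Q = x at *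
  constructor
  · intro τ hτ
    have hxε : 2 * Real.pi * (1 / x) * (ε / 2) ≤ Real.exp 1 :=
      calc 2 * Real.pi * (1 / x) * (ε / 2) = Real.pi * ε / x := by ring
        _ ≤ Real.exp 1 := (div_le_iff₀ hx).2 h
    exact two_mul_Tbound_le_add_of_mul_le_sq (half_pos hε) (one_div_pos.2 hx) hτ
      (cuspSpeed_pos hx.ne' hτ r) hxε (im_mul_cuspSpeed_le x r τ)
  · have him : ((r : ℂ) + Complex.I / (x : ℂ)).im = 1 / x := by simp
    rw [cuspSpeed_ofReal_add_I_div hx.ne', him, two_mul]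

/-- Splitting the path from `i∞` to the cusp `r` at the point `τ = r + i/(m√Q)`
minimizes the total number of terms needed in the two sums. -/
theorem optimal_split_point (ε r Q m : ℝ) (hε : 0 < ε) (hQ : 0 < Q) (hm : 0 < m)
    (h : Real.pi * ε ≤ Real.exp 1 * m * Real.sqrt Q) :
    (∀ τ : ℂ, Real.pi * ε / (Q * m ^ 2 * Real.exp 1) ≤ τ.im →
      τ.im ≤ Real.exp 1 / (Real.pi * ε) →
      Tbound τ.im (ε / 2) +
        Tbound (τ.im / (Q * m ^ 2 * ‖τ - (r : ℂ)‖ ^ 2)) (ε / 2) ≥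
      2 * Tbound (1 / (m * Real.sqrt Q)) (ε / 2)) ∧
    (let τ₀ : ℂ := (r : ℂ) + Complex.I / ((m : ℂ) * (Real.sqrt Q : ℂ))
     Tbound τ₀.im (ε / 2) +
       Tbound (τ₀.im / (Q * m ^ 2 * ‖τ₀ - (r : ℂ)‖ ^ 2)) (ε / 2) =
     2 * Tbound (1 / (m * Real.sqrt Q)) (ε / 2)) := by
  obtain ⟨hmin, heq⟩ := optimal_split_point_general ε r Q m hε hQ hm h
  exact ⟨fun τ hτ _ => hmin τ (hτ.trans_lt' (by positivity)), heq⟩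
end

section
/- Let r and r' be distinct real numbers and let c > 0. For every complex number τ = x + iy with y > 0 satisfying |τ − r| = c·|τ − r'|, one has y/|τ − r|² ≤ 1/(c·|r − r'|). Moreover the point τ₀ = x₀ + iy₀ with x₀ = (c²r' + r)/(c² + 1) and y₀ = c·|r' − r|/(c² + 1) satisfies |τ₀ − r| = c·|τ₀ − r'| and attains equality: y₀/|τ₀ − r|² = 1/(c·|r − r'|). -/
/-!
The triangle with vertices `τ`, `r`, `r'` has base `|r - r'|` and height `|Im τ|`, so
`|Im τ| * |r - r'| ≤ ‖τ - r‖ * ‖τ - r'‖`, and on the circle `‖τ - r‖ = c * ‖τ - r'‖` the right-hand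
side is `‖τ - r‖ ^ 2 / c`. Equality means a right angle at `τ`: the optimal point is the
intersection of that circle with the upper semicircle of diameter `[r, r']`.
-/

theorem abs_im_mul_abs_sub_le_norm_mul_norm (τ : ℂ) (r r' : ℝ) :
    |τ.im| * |r - r'| ≤ ‖τ - (r : ℂ)‖ * ‖τ - (r' : ℂ)‖ := by
  have im_mul_conj : ((τ - r) * (starRingEnd ℂ) (τ - r')).im = τ.im * (r - r') := by
    simp only [Complex.mul_im, Complex.conj_re, Complex.conj_im, Complex.sub_re, Complex.sub_im,
      Complex.ofReal_re, Complex.ofReal_im]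
    ring
  simpa only [im_mul_conj, abs_mul, norm_mul, Complex.norm_conj] using
    Complex.abs_im_le_norm ((τ - r) * (starRingEnd ℂ) (τ - r'))

theorem abs_im_mul_le_sq_norm_sub {τ : ℂ} {r r' c : ℝ} (hc : 0 ≤ c)
    (h : c * ‖τ - (r' : ℂ)‖ ≤ ‖τ - (r : ℂ)‖) :
    |τ.im| * (c * |r - r'|) ≤ ‖τ - (r : ℂ)‖ ^ 2 :=
  calc |τ.im| * (c * |r - r'|) = c * (|τ.im| * |r - r'|) := by ring
    _ ≤ c * (‖τ - (r : ℂ)‖ * ‖τ - (r' : ℂ)‖) := by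
      exact mul_le_mul_of_nonneg_left (abs_im_mul_abs_sub_le_norm_mul_norm τ r r') hc
    _ = ‖τ - (r : ℂ)‖ * (c * ‖τ - (r' : ℂ)‖) := by ring
    _ ≤ ‖τ - (r : ℂ)‖ * ‖τ - (r : ℂ)‖ := by gcongr
    _ = ‖τ - (r : ℂ)‖ ^ 2 := (sq _).symm

theorem sq_norm_sub_ofReal (τ : ℂ) (r : ℝ) :
    ‖τ - (r : ℂ)‖ ^ 2 = (τ.re - r) ^ 2 + τ.im ^ 2 := by
  rw [Complex.sq_norm, Complex.normSq_apply, Complex.sub_re, Complex.sub_im, Complex.ofReal_re,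
    Complex.ofReal_im, sub_zero, sq, sq]

/-- The point `τ₀` maximizing `Im τ / ‖τ - r‖ ^ 2` on the circle `‖τ - r‖ = c * ‖τ - r'‖`, written
in the form `x₀ + y₀ * I` of the paper. -/
noncomputable def optimalPoint (c r r' : ℝ) : ℂ :=
  (((c ^ 2 * r' + r) / (c ^ 2 + 1) : ℝ) : ℂ) +
    ((c * |r' - r| / (c ^ 2 + 1) : ℝ) : ℂ) * Complex.I

namespace optimalPoint

variable (c r r' : ℝ)

theorem re_eq : (optimalPoint c r r').re = (c ^ 2 * r' + r) / (c ^ 2 + 1) := by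
  rw [optimalPoint, ← Complex.mk_eq_add_mul_I]

theorem im_eq : (optimalPoint c r r').im = c * |r - r'| / (c ^ 2 + 1) := by
  rw [optimalPoint, ← Complex.mk_eq_add_mul_I, abs_sub_comm]

theorem sq_norm_sub_left :
    ‖optimalPoint c r r' - (r : ℂ)‖ ^ 2 = (c * |r - r'|) ^ 2 / (c ^ 2 + 1) := by
  rw [sq_norm_sub_ofReal, re_eq, im_eq, div_pow, mul_pow, sq_abs]
  field_simp
  ring

theorem sq_norm_sub_right :
    ‖optimalPoint c r r' - (r' : ℂ)‖ ^ 2 = |r - r'| ^ 2 / (c ^ 2 + 1) := by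
  rw [sq_norm_sub_ofReal, re_eq, im_eq, div_pow, mul_pow, sq_abs]
  field_simp
  ring

variable {c} in
theorem norm_sub_left_eq_mul (hc : 0 ≤ c) :
    ‖optimalPoint c r r' - (r : ℂ)‖ = c * ‖optimalPoint c r r' - (r' : ℂ)‖ := by
  rw [← sq_eq_sq₀ (norm_nonneg _) (by positivity), mul_pow, sq_norm_sub_left, sq_norm_sub_right,
    mul_pow, mul_div_assoc]

end optimalPoint

theorem optimal_point_on_circle_general (r r' : ℝ) (hrr : r ≠ r') (c : ℝ) (hc : 0 < c) :
    (∀ τ : ℂ, c * ‖τ - (r' : ℂ)‖ ≤ ‖τ - (r : ℂ)‖ →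
      |τ.im| / ‖τ - (r : ℂ)‖ ^ 2 ≤ 1 / (c * |r - r'|)) ∧
    ‖optimalPoint c r r' - (r : ℂ)‖ = c * ‖optimalPoint c r r' - (r' : ℂ)‖ ∧
    (optimalPoint c r r').im / ‖optimalPoint c r r' - (r : ℂ)‖ ^ 2 = 1 / (c * |r - r'|) := by
  have mul_dist_pos : 0 < c * |r - r'| := mul_pos hc (abs_pos.mpr (sub_ne_zero.mpr hrr))
  refine ⟨fun τ h => ?_, optimalPoint.norm_sub_left_eq_mul r r' hc.le, ?_⟩
  · apply div_le_of_le_mul₀ (sq_nonneg _) (one_div_pos.mpr mul_dist_pos).le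
    rw [one_div_mul_eq_div, le_div_iff₀ mul_dist_pos]
    exact abs_im_mul_le_sq_norm_sub hc.le h
  · rw [optimalPoint.im_eq, optimalPoint.sq_norm_sub_left,
      div_div_div_cancel_right₀ (by positivity), sq, div_mul_cancel_left₀ mul_dist_pos.ne', one_div]

/-- On the circle `|τ - r| = c·|τ - r'|` the quantity `Im(τ)/|τ - r|²` is at
most `1/(c·|r - r'|)`, with equality at the stated point `τ₀`. -/
theorem optimal_point_on_circle (r r' : ℝ) (hrr : r ≠ r') (c : ℝ) (hc : 0 < c) :
    (∀ τ : ℂ, 0 < τ.im → ‖τ - (r : ℂ)‖ = c * ‖τ - (r' : ℂ)‖ →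
      τ.im / ‖τ - (r : ℂ)‖ ^ 2 ≤ 1 / (c * |r - r'|)) ∧
    (let τ₀ : ℂ := (((c ^ 2 * r' + r) / (c ^ 2 + 1) : ℝ) : ℂ) +
      ((c * |r' - r| / (c ^ 2 + 1) : ℝ) : ℂ) * Complex.I
     ‖τ₀ - (r : ℂ)‖ = c * ‖τ₀ - (r' : ℂ)‖ ∧
     τ₀.im / ‖τ₀ - (r : ℂ)‖ ^ 2 = 1 / (c * |r - r'|)) := by
  obtain ⟨bound, attained⟩ := optimal_point_on_circle_general r r' hrr c hc
  exact ⟨fun τ hτ h => abs_of_pos hτ ▸ bound τ h.ge, attained⟩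
end
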